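/- The subscheme of affine 12-space cut out by $X_{22}=X_{33}$, $Y_{22}=Y_{33}$, $X_{12}(Y_{11}-Y_{22}) = Y_{12}(X_{11}-X_{22})$, and $X_{13}(Y_{11}-Y_{22}) - Y_{13}(X_{11}-X_{22}) = X_{12}Y_{23} - X_{23}Y_{12}$ has dimension 8. -/

import Mathlib

/-!
Write `a = X₁₁ - X₂₂` and `b = Y₁₁ - Y₂₂`. In terms of `p = X₁₂ - b` and `q = Y₁₃ - a`, the two
quadratic equations become `b² + p b = Y₁₂ a` and
`a² + q a + (p Y₂₃ - Y₁₂ X₂₃) = (X₁₃ - Y₂₃) b`, so the scheme is finite over the affine 8-space with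
coordinates `p, q, Y₁₂, X₁₃, X₂₃, Y₂₃, X₂₂, Y₂₂`, and its dimension is at most 8. Conversely, four
equations without constant term in 12-space cut out a scheme of dimension at least `12 - 4` at the
origin, by Krull's height theorem. Over a Noetherian base ring `R` the same two bounds hold with
`dim R` added.
-/

open MvPolynomial

section Integral

variable {A B : Type*} [CommRing A] [CommRing B] [Algebra A B]

theorem ringKrullDim_le_of_isIntegral [Algebra.IsIntegral A B] :
    ringKrullDim B ≤ ringKrullDim A :=
  Order.krullDim_le_of_strictMono (PrimeSpectrum.comap (algebraMap A B)) fun _ _ h ↦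
    Ideal.IsIntegral.comap_lt_comap h

theorem isIntegral_of_adjoin_eq_top {R : Type*} [CommRing R] [Algebra R A] [Algebra R B]
    [IsScalarTower R A B] {s : Set B} (hs : Algebra.adjoin R s = ⊤)
    (hint : ∀ x ∈ s, IsIntegral A x) : Algebra.IsIntegral A B := by
  refine ⟨fun x ↦ ?_⟩
  have hle : Algebra.adjoin R s ≤ (integralClosure A B).restrictScalars R :=
    Algebra.adjoin_le hint
  exact hle (hs ▸ Algebra.mem_top)

theorem isIntegral_of_monic_quadratic_pair {a b : B} (p r y q c z : A)
    (hb : b ^ 2 + algebraMap A B p * b + algebraMap A B r = algebraMap A B y * a)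
    (ha : a ^ 2 + algebraMap A B q * a + algebraMap A B c = algebraMap A B z * b) :
    IsIntegral A b := by
  nontriviality A
  let f : Polynomial A := .X ^ 2 + .C p * .X + .C r
  -- `y a = f(b)`, so substituting in `y²` times `ha` eliminates `a`.
  let g : Polynomial A := f ^ 2 + .C (q * y) * f + .C (y ^ 2) * (.C c - .C z * .X)
  have hg : g.Monic := by
    simp only [g, f]
    monicity!
  refine ⟨g, hg, ?_⟩
  have hf : f.eval₂ (algebraMap A B) b = algebraMap A B y * a := by simp [f, ← hb]
  simp only [g, Polynomial.eval₂_add, Polynomial.eval₂_pow, Polynomial.eval₂_mul,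
    Polynomial.eval₂_sub, Polynomial.eval₂_C, Polynomial.eval₂_X, hf, map_mul, map_pow]
  linear_combination algebraMap A B y ^ 2 * ha

end Integral

section KrullHeight

variable {R : Type*} [CommRing R] [IsNoetherianRing R]

theorem height_comap_constantCoeff {σ : Type*} [Finite σ] (m : Ideal R) [m.IsMaximal] :
    (m.comap (constantCoeff : MvPolynomial σ R →+* R)).height = m.height + Nat.card σ := by
  induction σ using Finite.induction_empty_option with
  | of_equiv e ih =>
    have h : constantCoeff.comp (renameEquiv R e).toRingEquiv.toRingHom = constantCoeff := by
      ext <;> simp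
    rw [← Nat.card_congr e, ← ih, ← h, ← Ideal.comap_comap]
    exact ((renameEquiv R e).toRingEquiv.height_comap _).symm
  | h_empty =>
    have h : (isEmptyRingEquiv R PEmpty).toRingHom = constantCoeff :=
      RingHom.ext fun _ ↦ isEmptyRingEquiv_eq_coeff_zero R
    rw [← h, Nat.card_of_isEmpty, Nat.cast_zero, add_zero]
    exact (isEmptyRingEquiv R PEmpty).height_comap m
  | @h_option τ _ ih =>
    let M := m.comap (constantCoeff : MvPolynomial τ R →+* R)
    let N := M.comap (Polynomial.constantCoeff : Polynomial (MvPolynomial τ R) →+* _)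
    have : M.IsMaximal := Ideal.comap_isMaximal_of_surjective _ fun r ↦ ⟨C r, by simp⟩
    have : N.IsMaximal := Ideal.comap_isMaximal_of_surjective _ Polynomial.constantCoeff_surjective
    have : N.LiesOver M := ⟨by ext; simp [N, Ideal.under]⟩
    have h : (constantCoeff.comp Polynomial.constantCoeff).comp
        (optionEquivLeft R τ).toRingEquiv.toRingHom = constantCoeff := by
      ext i
      · simp
      · cases i <;> simp
    have hN : (m.comap (constantCoeff : MvPolynomial (Option τ) R →+* R)).height = N.height := by
      rw [← h, ← Ideal.comap_comap, ← Ideal.comap_comap]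
      exact (optionEquivLeft R τ).toRingEquiv.height_comap N
    rw [hN, Polynomial.height_eq_height_add_one M N, ih, Finite.card_option, Nat.cast_succ,
      add_assoc]

theorem ringKrullDim_add_card_le_of_constantCoeff_eq_zero {σ : Type*} [Finite σ]
    {s : Set (MvPolynomial σ R)} (hs : ∀ f ∈ s, constantCoeff f = 0) :
    ringKrullDim R + Nat.card σ ≤ ringKrullDim (MvPolynomial σ R ⧸ Ideal.span s) + s.encard := by
  nontriviality R
  have height_le (m : Ideal R) [m.IsMaximal] : ((m.height + Nat.card σ : ℕ∞) : WithBot ℕ∞) ≤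
      ringKrullDim (MvPolynomial σ R ⧸ Ideal.span s) + s.encard := by
    rw [← height_comap_constantCoeff]
    exact Ideal.height_le_ringKrullDim_quotient_add_encard s fun f hf ↦ by simp [hs f hf]
  obtain ⟨m₀, hm₀⟩ := Ideal.exists_maximal R
  generalize ringKrullDim (MvPolynomial σ R ⧸ Ideal.span s) + s.encard = d at height_le ⊢
  lift d to ℕ∞ using ne_bot_of_le_ne_bot WithBot.coe_ne_bot (height_le m₀)
  rw [← Ideal.sup_isMaximal_height_eq_ringKrullDim]
  norm_cast
  rw [ENat.biSup_add' ⟨m₀, hm₀⟩]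
  exact iSup₂_le fun m _ ↦ WithBot.coe_le_coe.1 (height_le m)

end KrullHeight

section Flag

variable (R : Type*) [CommRing R]

/-- The four equations of `Flag_{x,x,y}` in affine 12-space over `R`, with the coordinates
`X₁₁,X₁₂,X₁₃,X₂₂,X₂₃,X₃₃,Y₁₁,Y₁₂,Y₁₃,Y₂₂,Y₂₃,Y₃₃` numbered `0,…,11`. The last two are the entries
`(1, 2)` and `(1, 3)` of the commutator of the matrices `X` and `Y`, up to sign and the first two
equations. -/
noncomputable def flagRelations : Set (MvPolynomial (Fin 12) R) :=
  {X 3 - X 5,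
   X 9 - X 11,
   X 1 * (X 6 - X 9) - X 7 * (X 0 - X 3),
   X 2 * (X 6 - X 9) - X 8 * (X 0 - X 3) - (X 1 * X 10 - X 4 * X 7)}

theorem encard_flagRelations_le : (flagRelations R).encard ≤ 4 := by
  unfold flagRelations
  grw [Set.encard_insert_le, Set.encard_insert_le, Set.encard_insert_le, Set.encard_singleton]
  norm_num

variable {R}

theorem constantCoeff_eq_zero_of_mem_flagRelations {f : MvPolynomial (Fin 12) R}
    (hf : f ∈ flagRelations R) : constantCoeff f = 0 := by
  rcases hf with rfl | rfl | rfl | rfl <;> simp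

variable {S : Type*} [CommRing S] [Algebra R S] {x : Fin 12 → S}

theorem forall_mem_flagRelations_aeval_eq_zero_iff :
    (∀ f ∈ flagRelations R, aeval x f = 0) ↔
      x 3 = x 5 ∧ x 9 = x 11 ∧ x 1 * (x 6 - x 9) = x 7 * (x 0 - x 3) ∧
        x 2 * (x 6 - x 9) - x 8 * (x 0 - x 3) = x 1 * x 10 - x 4 * x 7 := by
  simp [flagRelations, sub_eq_zero]

/-- The values `p, q, Y₁₂, X₁₃, X₂₃, Y₂₃, X₂₂, Y₂₂` at a point `x` of affine 12-space of the linear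
forms that make `Flag_{x,x,y}` finite over affine 8-space, where `p = X₁₂ - (Y₁₁ - Y₂₂)` and
`q = Y₁₃ - (X₁₁ - X₂₂)`. -/
def flagParameters (x : Fin 12 → S) : Fin 8 → S :=
  ![x 1 - (x 6 - x 9), x 8 - (x 0 - x 3), x 7, x 2, x 4, x 10, x 3, x 9]

variable (R x) in
/-- The `R`-subalgebra generated by the parameters, in which `flagParameters x` takes its values. -/
abbrev flagParameterAlgebra : Subalgebra R S :=
  Algebra.adjoin R (Set.range (flagParameters x))

theorem isIntegral_diagonal_sub_of_flagRelations (hx : ∀ f ∈ flagRelations R, aeval x f = 0) :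
    IsIntegral (flagParameterAlgebra R x) (x 0 - x 3) ∧
      IsIntegral (flagParameterAlgebra R x) (x 6 - x 9) := by
  obtain ⟨-, -, h₁₂, h₁₃⟩ := forall_mem_flagRelations_aeval_eq_zero_iff.1 hx
  let t (i : Fin 8) : flagParameterAlgebra R x :=
    ⟨flagParameters x i, Algebra.subset_adjoin ⟨i, rfl⟩⟩
  let φ := algebraMap (flagParameterAlgebra R x) S
  have hp : φ (t 0) = x 1 - (x 6 - x 9) := rfl
  have hq : φ (t 1) = x 8 - (x 0 - x 3) := rfl
  have hb : (x 6 - x 9) ^ 2 + φ (t 0) * (x 6 - x 9) + φ 0 = φ (t 2) * (x 0 - x 3) := by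
    have hY₁₂ : φ (t 2) = x 7 := rfl
    rw [hp, hY₁₂, map_zero]
    linear_combination h₁₂
  have ha : (x 0 - x 3) ^ 2 + φ (t 1) * (x 0 - x 3) + φ (t 0 * t 5 - t 2 * t 4) =
      φ (t 3 - t 5) * (x 6 - x 9) := by
    have hc : φ (t 0 * t 5 - t 2 * t 4) = (x 1 - (x 6 - x 9)) * x 10 - x 7 * x 4 := rfl
    have hz : φ (t 3 - t 5) = x 2 - x 10 := rfl
    rw [hq, hc, hz]
    linear_combination -h₁₃
  exact ⟨isIntegral_of_monic_quadratic_pair _ _ _ _ _ _ ha hb,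
    isIntegral_of_monic_quadratic_pair _ _ _ _ _ _ hb ha⟩

theorem isIntegral_of_flagRelations (hx : ∀ f ∈ flagRelations R, aeval x f = 0) (j : Fin 12) :
    IsIntegral (flagParameterAlgebra R x) (x j) := by
  obtain ⟨h₃₅, h₉₁₁, -⟩ := forall_mem_flagRelations_aeval_eq_zero_iff.1 hx
  obtain ⟨ha, hb⟩ := isIntegral_diagonal_sub_of_flagRelations hx
  have ht (i : Fin 8) : IsIntegral (flagParameterAlgebra R x) (flagParameters x i) :=
    isIntegral_algebraMap (x := (⟨_, Algebra.subset_adjoin ⟨i, rfl⟩⟩ : flagParameterAlgebra R x))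
  fin_cases j
  · simpa [flagParameters] using ha.add (ht 6)
  · simpa [flagParameters] using (ht 0).add hb
  · exact ht 3
  · exact ht 6
  · exact ht 4
  · exact h₃₅ ▸ ht 6
  · simpa [flagParameters] using hb.add (ht 7)
  · exact ht 2
  · simpa [flagParameters] using (ht 1).add ha
  · exact ht 7
  · exact ht 5
  · exact h₉₁₁ ▸ ht 7

theorem ringKrullDim_le_of_flagRelations (hgen : Algebra.adjoin R (Set.range x) = ⊤)
    (hx : ∀ f ∈ flagRelations R, aeval x f = 0) :
    ringKrullDim S ≤ ringKrullDim (MvPolynomial (Fin 8) R) := by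
  have : Algebra.IsIntegral (flagParameterAlgebra R x) S :=
    isIntegral_of_adjoin_eq_top hgen (Set.forall_mem_range.2 (isIntegral_of_flagRelations hx))
  refine (ringKrullDim_le_of_isIntegral (A := flagParameterAlgebra R x)).trans ?_
  rw [flagParameterAlgebra, Algebra.adjoin_range_eq_range_aeval]
  exact ringKrullDim_le_of_surjective _ (aeval (flagParameters x)).rangeRestrict_surjective

end Flag

theorem flag_xxy_dimension_eight_general {R : Type*} [CommRing R] [IsNoetherianRing R] :
    ringKrullDim (MvPolynomial (Fin 12) R ⧸ Ideal.span (flagRelations R)) =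
      ringKrullDim R + 8 := by
  apply le_antisymm
  · let q := Ideal.Quotient.mkₐ R (Ideal.span (flagRelations R))
    have hgen : Algebra.adjoin R (Set.range (q ∘ X)) = ⊤ := by
      rw [Set.range_comp, ← AlgHom.map_adjoin, adjoin_range_X, Algebra.map_top,
        AlgHom.range_eq_top]
      exact Ideal.Quotient.mkₐ_surjective R _
    have hq (f) (hf : f ∈ flagRelations R) : aeval (q ∘ X) f = 0 := by
      rw [← aeval_unique]
      exact Ideal.Quotient.eq_zero_iff_mem.2 (Ideal.subset_span hf)
    simpa using ringKrullDim_le_of_flagRelations hgen hq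
  · have h := ringKrullDim_add_card_le_of_constantCoeff_eq_zero
      (fun f hf ↦ constantCoeff_eq_zero_of_mem_flagRelations (R := R) hf)
    have hcard : ((flagRelations R).encard : WithBot ℕ∞) ≤ 4 :=
      WithBot.coe_le_coe.2 (encard_flagRelations_le R)
    rw [← ENat.WithBot.add_le_add_natCast_right_iff (c := 4)]
    calc
      ringKrullDim R + 8 + (4 : ℕ) = ringKrullDim R + Nat.card (Fin 12) := by
        norm_num [add_assoc]
      _ ≤ _ := h
      _ ≤ _ := by push_cast; gcongr

/-- The scheme `Flag_{x,x,y}` for `S = 𝔸²` has dimension 8. Variables `0,…,5` are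
`X₁₁,X₁₂,X₁₃,X₂₂,X₂₃,X₃₃` and `6,…,11` are `Y₁₁,Y₁₂,Y₁₃,Y₂₂,Y₂₃,Y₃₃`. -/
theorem flag_xxy_dimension_eight {k : Type*} [Field k] [IsAlgClosed k] :
    ringKrullDim (MvPolynomial (Fin 12) k ⧸
      Ideal.span ({X 3 - X 5,
                   X 9 - X 11,
                   X 1 * (X 6 - X 9) - X 7 * (X 0 - X 3),
                   X 2 * (X 6 - X 9) - X 8 * (X 0 - X 3) - (X 1 * X 10 - X 4 * X 7)} :
        Set (MvPolynomial (Fin 12) k))) = 8 :=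
  flag_xxy_dimension_eight_general.trans (by rw [ringKrullDim_eq_zero_of_field, zero_add])
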